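/- Let p be an odd prime, m = p², d = (p+1)/2, and suppose β = (b_1,...,b_{2d}) is a strictly increasing tuple with 1 ≤ b_1 < ... < b_{2d} ≤ m-1 such that the sum over i of ⟨t·b_i⟩_m equals d·m for every t coprime to m, and suppose no proper nonempty even-cardinality subset of {b_1,...,b_{2d}} sums to a multiple of m. Then β equals (after sorting) one of the p-1 tuples β_i = (i, i+p, ..., i+(p-1)p, p(p-i)) for some 1 ≤ i ≤ p-1. -/

import Mathlib

/-- The set of entries of the tuple β_i = (i, i+p, …, i+(p-1)p, p(p-i)). -/
def betaSet (p i : ℕ) : Finset ℕ :=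
  ((Finset.range p).image (fun h => i + h * p)) ∪ {p * (p - i)}

/-!
Let `B` be a family of residues mod `N` such that `∑ i, ⟨t * B i⟩` is the same for all units `t`.
Multiplying by `χ⁻¹ t` for an odd primitive character `χ` and summing over `t` gives
`(∑ i, χ (B i)) * ∑ t, χ⁻¹ t * ⟨t⟩ = 0`. The second factor is `-N * L(0, χ⁻¹)`, which the functional
equation relates to `L(1, χ) ≠ 0`, so `∑ i, χ (B i) = 0`. The odd Hurwitz zeta value `1 / 2 - x`
at `s = 0` needed here comes from subtracting a telescoping linear interpolation from the series,
which continues it past `s = 0`.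

By orthogonality, the odd part `a ↦ #{B = a} - #{B = -a}` of the multiplicity function is then
unchanged on multiplying a unit `a` by a unit on which all imprimitive characters are trivial. For
`N = p ^ 2` these units are the ones `≡ 1` mod `p`. If no two entries sum to `0`, an entry `r` prime
to `p` thus brings along all `p` residues congruent to it mod `p`; such an entry exists because
there are fewer than `p + 1` nonzero multiples of `p`, and the last entry is read off from the sum,
which the unit `t = -1` forces to be half of `(p + 1) * p ^ 2`.
-/

section HurwitzZeta

open AffineMap HurwitzZeta Set

lemma norm_apply_lineMap_sub_lineMap_le {E : Type*} [NormedAddCommGroup E] [NormedSpace ℝ E]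
    {f f' f'' : ℝ → E} {a b t M : ℝ} (hab : a ≤ b) (ht : t ∈ Icc 0 1)
    (hf : ∀ u ∈ Icc a b, HasDerivWithinAt f (f' u) (Icc a b) u)
    (hf' : ∀ u ∈ Icc a b, HasDerivWithinAt f' (f'' u) (Icc a b) u)
    (hM : ∀ u ∈ Icc a b, ‖f'' u‖ ≤ M) :
    ‖f (lineMap a b t) - lineMap (f a) (f b) t‖ ≤ M * (b - a) ^ 2 := by
  have ha : a ∈ Icc a b := left_mem_Icc.2 hab
  have hb : b ∈ Icc a b := right_mem_Icc.2 hab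
  have hx : lineMap a b t ∈ Icc a b := (convex_Icc a b).lineMap_mem ha hb ht
  have hM0 : 0 ≤ M := (norm_nonneg _).trans (hM a ha)
  have hdist : ∀ u ∈ Icc a b, ∀ v ∈ Icc a b, ‖v - u‖ ≤ b - a := fun u hu v hv =>
    Real.dist_le_of_mem_Icc hv hu
  have hderiv : ∀ u ∈ Icc a b, ‖f' u - f' a‖ ≤ M * (b - a) := fun u hu =>
    ((convex_Icc a b).norm_image_sub_le_of_norm_hasDerivWithin_le hf' hM ha hu).trans
      (by gcongr; exact hdist a ha u hu)
  -- Interpolation is exact on affine functions, so the tangent slope at `a` may be subtracted.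
  set k : ℝ → E := fun u => f u - u • f' a with hk
  have hkd : ∀ u ∈ Icc a b, HasDerivWithinAt k (f' u - f' a) (Icc a b) u := fun u hu =>
    (hf u hu).sub (by simpa using (hasDerivWithinAt_id u (Icc a b)).smul_const (f' a))
  have hvar : ∀ u ∈ Icc a b, ‖k (lineMap a b t) - k u‖ ≤ M * (b - a) ^ 2 := fun u hu =>
    ((convex_Icc a b).norm_image_sub_le_of_norm_hasDerivWithin_le hkd hderiv hu hx).trans <| by
      rw [pow_two, ← mul_assoc]
      have := sub_nonneg.2 hab
      gcongr
      exact hdist u hu _ hx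
  have hsplit : f (lineMap a b t) - lineMap (f a) (f b) t =
      (1 - t) • (k (lineMap a b t) - k a) + t • (k (lineMap a b t) - k b) := by
    simp only [hk, lineMap_apply_module]
    module
  rw [hsplit]
  simpa using convex_closedBall (0 : E) (M * (b - a) ^ 2) (mem_closedBall_zero_iff.2 (hvar a ha))
    (mem_closedBall_zero_iff.2 (hvar b hb)) (sub_nonneg.2 ht.2) ht.1 (sub_add_cancel 1 t)

lemma hasDerivAt_ofReal_cpow_const_of_pos (c : ℂ) {u : ℝ} (hu : 0 < u) :
    HasDerivAt (fun y : ℝ => (y : ℂ) ^ c) (c * (u : ℂ) ^ (c - 1)) u := by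
  simpa using (HasDerivAt.cpow_const (c := c) (hasDerivAt_id (u : ℂ))
    (Complex.ofReal_mem_slitPlane.2 hu)).comp_ofReal

lemma norm_cpow_sub_lineMap_le {s : ℂ} (hs : -2 ≤ s.re) {a t : ℝ} (ha : 0 < a)
    (ht : t ∈ Icc 0 1) :
    ‖((lineMap a (a + 1) t : ℝ) : ℂ) ^ (-s) -
        lineMap ((a : ℂ) ^ (-s)) (((a + 1 : ℝ) : ℂ) ^ (-s)) t‖ ≤
      ‖s‖ * ‖s + 1‖ * a ^ (-(s.re + 2)) := by
  have hpos : ∀ u ∈ Icc a (a + 1), 0 < u := fun u hu => ha.trans_le hu.1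
  have hbound : ∀ u ∈ Icc a (a + 1), ‖-s * ((-s - 1) * (u : ℂ) ^ (-s - 1 - 1))‖ ≤
      ‖s‖ * ‖s + 1‖ * a ^ (-(s.re + 2)) := fun u hu => by
    have hexp : (-(s + 1) - 1).re = -(s.re + 2) := by simp; ring
    rw [← neg_add', norm_mul, norm_mul, norm_neg, norm_neg,
      Complex.norm_cpow_eq_rpow_re_of_pos (hpos u hu), hexp, ← mul_assoc]
    gcongr ?_ * ?_
    exact Real.rpow_le_rpow_of_nonpos ha hu.1 (by linarith)
  simpa using norm_apply_lineMap_sub_lineMap_le (f := fun u : ℝ => (u : ℂ) ^ (-s))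
    (le_add_of_nonneg_right zero_le_one) ht
    (fun u hu => (hasDerivAt_ofReal_cpow_const_of_pos (-s) (hpos u hu)).hasDerivWithinAt)
    (fun u hu =>
      ((hasDerivAt_ofReal_cpow_const_of_pos (-s - 1) (hpos u hu)).const_mul (-s)).hasDerivWithinAt)
    hbound

/-- The error at `n + 1 + t` of the linear interpolation of `u ↦ u ^ (-s)` between `n + 1` and
`n + 2`. Being of order `n ^ (-s - 2)`, these errors form a series converging beyond `s = 0`,
which continues the Hurwitz series `∑ (n + t) ^ (-s)` analytically. -/
noncomputable def cpowInterpolationError (n : ℕ) (t : ℝ) (s : ℂ) : ℂ :=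
  ((n + 1 + t : ℝ) : ℂ) ^ (-s) -
    ((1 - t) * ((n + 1 : ℝ) : ℂ) ^ (-s) + t * ((n + 1 + 1 : ℝ) : ℂ) ^ (-s))

lemma norm_cpowInterpolationError_le (n : ℕ) {t : ℝ} (ht : t ∈ Icc 0 1) {s : ℂ}
    (hs : -2 ≤ s.re) :
    ‖cpowInterpolationError n t s‖ ≤ ‖s‖ * ‖s + 1‖ * (n + 1 : ℝ) ^ (-(s.re + 2)) := by
  have hn : (0 : ℝ) < n + 1 := n.cast_add_one_pos
  convert norm_cpow_sub_lineMap_le hs hn ht using 2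
  simp only [cpowInterpolationError, lineMap_apply_module, Complex.real_smul, smul_eq_mul]
  push_cast
  ring_nf

lemma norm_cpowInterpolationError_le_of_mem_ball (n : ℕ) {t : ℝ} (ht : t ∈ Icc 0 1) {s : ℂ}
    (hs : s ∈ Metric.ball 1 (3 / 2)) :
    ‖cpowInterpolationError n t s‖ ≤ 9 * ((n + 1 : ℕ) : ℝ) ^ (-(3 / 2) : ℝ) := by
  rw [mem_ball_iff_norm] at hs
  have hre : -(1 / 2) ≤ s.re := by
    have := (abs_le.1 (Complex.abs_re_le_norm (s - 1))).1
    rw [Complex.sub_re, Complex.one_re] at this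
    linarith
  have hnorm : ‖s‖ ≤ 5 / 2 := by
    have := norm_add_le (s - 1) 1
    rw [sub_add_cancel, norm_one] at this
    linarith
  have hnorm' : ‖s + 1‖ ≤ 7 / 2 := by
    have := norm_add_le s 1
    rw [norm_one] at this
    linarith
  push_cast
  calc ‖cpowInterpolationError n t s‖
    _ ≤ ‖s‖ * ‖s + 1‖ * (n + 1 : ℝ) ^ (-(s.re + 2)) :=
      norm_cpowInterpolationError_le n ht (by linarith)
    _ ≤ 5 / 2 * (7 / 2) * (n + 1 : ℝ) ^ (-(3 / 2) : ℝ) := by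
      gcongr <;> linarith
    _ ≤ 9 * (n + 1 : ℝ) ^ (-(3 / 2) : ℝ) := by
      gcongr; norm_num

lemma differentiable_ofReal_cpow_neg {r : ℝ} (hr : 0 < r) :
    Differentiable ℂ fun s : ℂ => (r : ℂ) ^ (-s) := fun _ =>
  differentiableAt_id.neg.const_cpow (Or.inl (Complex.ofReal_ne_zero.2 hr.ne'))

lemma differentiable_cpowInterpolationError (n : ℕ) {t : ℝ} (ht : 0 ≤ t) :
    Differentiable ℂ (cpowInterpolationError n t) :=
  (differentiable_ofReal_cpow_neg (by positivity)).sub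
    (((differentiable_ofReal_cpow_neg (by positivity)).const_mul _).add
      ((differentiable_ofReal_cpow_neg (by positivity)).const_mul _))

lemma differentiableOn_tsum_cpowInterpolationError_sub {x : ℝ} (hx : x ∈ Icc 0 1) :
    DifferentiableOn ℂ
      (fun s => ∑' n, (cpowInterpolationError n x s - cpowInterpolationError n (1 - x) s))
      (Metric.ball 1 (3 / 2)) := by
  have hx' : 1 - x ∈ Icc (0 : ℝ) 1 := ⟨sub_nonneg.2 hx.2, sub_le_self 1 hx.1⟩
  have hsum : Summable fun n : ℕ => ((n + 1 : ℕ) : ℝ) ^ (-(3 / 2) : ℝ) :=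
    (summable_nat_add_iff 1).2 (Real.summable_nat_rpow.2 (by norm_num))
  refine Complex.differentiableOn_tsum_of_summable_norm
    ((hsum.mul_left 9).add (hsum.mul_left 9)) (fun n => ?_) Metric.isOpen_ball fun n s hs => ?_
  · exact ((differentiable_cpowInterpolationError n hx.1).sub
      (differentiable_cpowInterpolationError n hx'.1)).differentiableOn
  · exact (norm_sub_le _ _).trans (add_le_add
      (norm_cpowInterpolationError_le_of_mem_ball n hx hs)
      (norm_cpowInterpolationError_le_of_mem_ball n hx' hs))

lemma two_mul_hurwitzZetaOdd_eq_of_one_lt_re {x : ℝ} (hx : x ∈ Icc 0 1) {s : ℂ}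
    (hs : 1 < s.re) :
    2 * hurwitzZetaOdd x s = (x : ℂ) ^ (-s) - ((1 - x : ℝ) : ℂ) ^ (-s) + (1 - 2 * x) +
      ∑' n, (cpowInterpolationError n x s - cpowInterpolationError n (1 - x) s) := by
  have hodd := (hasSum_nat_add_iff' 1).2 ((hasSum_nat_hurwitzZetaOdd_of_mem_Icc hx hs).mul_left 2)
  have hzeta : Summable fun n : ℕ => ((n + 1 : ℝ) : ℂ) ^ (-s) := by
    refine ((summable_nat_add_iff 1).2 (Complex.summable_one_div_nat_cpow.2 hs)).congr fun n => ?_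
    simp [Complex.cpow_neg]
  have htelescope := hzeta.hasSum.sub ((hasSum_nat_add_iff' 1).2 hzeta.hasSum)
  have herror : HasSum
      (fun n => cpowInterpolationError n x s - cpowInterpolationError n (1 - x) s) _ :=
    (hodd.sub (htelescope.mul_left (1 - 2 * (x : ℂ)))).congr_fun fun n => by
      simp only [cpowInterpolationError, Complex.cpow_neg]
      push_cast
      rw [← add_sub_assoc (n + 1 : ℂ)]
      ring
  rw [herror.tsum_eq]
  simp only [Complex.cpow_neg, Complex.ofReal_sub, Complex.ofReal_one, Finset.range_one, one_div,
    Finset.sum_singleton, Nat.cast_zero, zero_add, Complex.ofReal_add, Complex.ofReal_natCast,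
    Complex.one_cpow, inv_one, sub_sub_cancel, mul_one, add_add_sub_cancel]
  ring

lemma two_mul_hurwitzZetaOdd_eq_of_mem_ball {x : ℝ} (hx : x ∈ Ioo 0 1) {s : ℂ}
    (hs : s ∈ Metric.ball 1 (3 / 2)) :
    2 * hurwitzZetaOdd x s = (x : ℂ) ^ (-s) - ((1 - x : ℝ) : ℂ) ^ (-s) + (1 - 2 * x) +
      ∑' n, (cpowInterpolationError n x s - cpowInterpolationError n (1 - x) s) := by
  have hx' : x ∈ Icc 0 1 := Ioo_subset_Icc_self hx
  have hleft : DifferentiableOn ℂ (fun s => 2 * hurwitzZetaOdd x s) (Metric.ball 1 (3 / 2)) :=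
    ((differentiable_hurwitzZetaOdd _).const_mul 2).differentiableOn
  have hright := (((differentiable_ofReal_cpow_neg hx.1).sub
    (differentiable_ofReal_cpow_neg (sub_pos.2 hx.2))).add_const
      (1 - 2 * (x : ℂ))).differentiableOn.add (differentiableOn_tsum_cpowInterpolationError_sub hx')
  have htwo : (2 : ℂ) ∈ Metric.ball (1 : ℂ) (3 / 2) := by
    rw [mem_ball_iff_norm]; norm_num
  refine (hleft.analyticOnNhd Metric.isOpen_ball).eqOn_of_preconnected_of_eventuallyEq
    (hright.analyticOnNhd Metric.isOpen_ball) (convex_ball _ _).isPreconnected htwo ?_ hs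
  filter_upwards [(isOpen_lt continuous_const Complex.continuous_re).mem_nhds
    (show (1 : ℝ) < (2 : ℂ).re by simp)] with s hs
  exact two_mul_hurwitzZetaOdd_eq_of_one_lt_re hx' hs

lemma hurwitzZetaOdd_apply_zero {x : ℝ} (hx : x ∈ Ioo 0 1) :
    hurwitzZetaOdd x 0 = 1 / 2 - x := by
  have hzero : (0 : ℂ) ∈ Metric.ball (1 : ℂ) (3 / 2) := by
    rw [mem_ball_iff_norm]; norm_num
  have herror (n : ℕ) (t : ℝ) : cpowInterpolationError n t 0 = 0 := by
    simp [cpowInterpolationError]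
  have h := two_mul_hurwitzZetaOdd_eq_of_mem_ball hx hzero
  simp only [herror, neg_zero, Complex.cpow_zero, sub_self, tsum_zero] at h
  linear_combination h / 2

end HurwitzZeta

section DirichletCharacter

open DirichletCharacter Finset

variable {N : ℕ}

lemma ne_one_of_odd {R : Type*} [CommRing R] [NeZero (2 : R)] {χ : DirichletCharacter R N}
    (hodd : χ.Odd) : χ ≠ 1 := by
  rintro rfl
  exact Odd.not_even _ hodd (MulChar.one_apply isUnit_one.neg)

lemma dvd_sub_one_of_unitsMap_eq_one {d : ℕ} (hd : d ∣ N) {u : (ZMod N)ˣ}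
    (hu : ZMod.unitsMap hd u = 1) : (d : ZMod N) ∣ u - 1 := by
  have hcast : ZMod.castHom hd (ZMod d) (u - 1) = 0 := by
    rw [map_sub, map_one, sub_eq_zero]
    exact congr_arg Units.val hu
  obtain ⟨x, hx⟩ := ZMod.intCast_surjective ((u : ZMod N) - 1)
  rw [← hx, map_intCast, ZMod.intCast_zmod_eq_zero_iff_dvd] at hcast
  simpa [← hx] using map_dvd (Int.castRingHom (ZMod N)) hcast

variable [NeZero N]

lemma LFunction_apply_zero_of_odd {Φ : ZMod N → ℂ} (hΦ : Φ.Odd) :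
    ZMod.LFunction Φ 0 = -(∑ j, Φ j * j.val) / N := by
  have hN : (0 : ℝ) < N := Nat.cast_pos.2 (NeZero.pos N)
  have hterm (j : ZMod N) : Φ j * HurwitzZeta.hurwitzZetaOdd (ZMod.toAddCircle j) 0 =
      1 / 2 * Φ j - Φ j * j.val / N := by
    rcases eq_or_ne j 0 with rfl | hj
    · simp [hΦ.map_zero]
    · have hval : (0 : ℝ) < j.val := Nat.cast_pos.2 (ZMod.val_pos.2 hj)
      rw [ZMod.toAddCircle_apply, hurwitzZetaOdd_apply_zero
        ⟨div_pos hval hN, (div_lt_one hN).2 (Nat.cast_lt.2 j.val_lt)⟩]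
      push_cast
      ring
  rw [ZMod.LFunction_def_odd hΦ, sum_congr rfl fun j _ => hterm j,
    sum_sub_distrib, ← mul_sum, ← sum_div, hΦ.sum_eq_zero]
  simp [neg_div]

lemma isPrimitive_inv {R : Type*} [CommRing R] {χ : DirichletCharacter R N}
    (hχ : χ.IsPrimitive) : χ⁻¹.IsPrimitive := by
  have hfactors {ψ : DirichletCharacter R N} {d : ℕ} (h : ψ⁻¹.FactorsThrough d) :
      ψ.FactorsThrough d := by
    obtain ⟨hd, ψ₀, hψ₀⟩ := h
    exact ⟨hd, ψ₀⁻¹, by rw [map_inv, ← hψ₀, inv_inv]⟩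
  have hle : χ.conductor ≤ χ⁻¹.conductor := Nat.sInf_le (hfactors χ⁻¹.factorsThrough_conductor)
  exact (Nat.le_of_dvd (NeZero.pos N) χ⁻¹.conductor_dvd_level).antisymm (hχ.symm.trans_le hle)

lemma LFunction_apply_zero_ne_zero {χ : DirichletCharacter ℂ N} (hodd : χ.Odd)
    (hχ : χ.IsPrimitive) : LFunction χ 0 ≠ 0 := by
  have hN : N ≠ 1 := by
    rintro rfl
    exact ne_one_of_odd hodd (level_one χ)
  have hone := LFunction_apply_one_ne_zero (inv_ne_one.2 (ne_one_of_odd hodd))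
  have hfunctional := (isPrimitive_inv hχ).completedLFunction_one_sub 0
  rw [inv_inv, sub_zero] at hfunctional
  rw [LFunction_eq_completed_div_gammaFactor _ _ (Or.inr hN), hfunctional] at hone
  rw [LFunction_eq_completed_div_gammaFactor _ _ (Or.inr hN), hodd.gammaFactor_def, zero_add,
    Complex.Gammaℝ_one, div_one]
  exact right_ne_zero_of_mul (div_ne_zero_iff.1 hone).1

lemma sum_mul_val_ne_zero {χ : DirichletCharacter ℂ N} (hodd : χ.Odd) (hχ : χ.IsPrimitive) :
    ∑ j, χ j * j.val ≠ 0 := fun h =>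
  LFunction_apply_zero_ne_zero hodd hχ <| by
    rw [LFunction, LFunction_apply_zero_of_odd hodd.to_fun, h, neg_zero, zero_div]

lemma exists_unit_mul_eq_self_and_apply_ne_one {R : Type*} [CommRing R]
    {χ : DirichletCharacter R N} (hχ : χ.IsPrimitive) {a : ZMod N} (ha : ¬ IsUnit a) :
    ∃ u : (ZMod N)ˣ, u * a = a ∧ χ u ≠ 1 := by
  set g := a.val.gcd N
  obtain ⟨k, hk⟩ : g ∣ a.val := Nat.gcd_dvd_left _ _
  have hgN : g ∣ N := Nat.gcd_dvd_right _ _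
  have hdN : N / g ∣ N := Nat.div_dvd_of_dvd hgN
  have hg : 1 < g := by
    rw [← ZMod.natCast_zmod_val a, ZMod.isUnit_iff_coprime] at ha
    exact lt_of_le_of_ne (Nat.gcd_pos_of_pos_right _ (NeZero.pos N)) (Ne.symm ha)
  have hnot : ¬ χ.FactorsThrough (N / g) := fun h =>
    (Nat.sInf_le h).not_gt ((Nat.div_lt_self (NeZero.pos N) hg).trans_eq hχ.symm)
  rw [factorsThrough_iff_ker_unitsMap hdN, SetLike.not_le_iff_exists] at hnot
  obtain ⟨u, hu, hχu⟩ := hnot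
  refine ⟨u, ?_, fun h => hχu (Units.ext h)⟩
  have hda : ((N / g : ℕ) : ZMod N) * a = 0 := by
    rw [← ZMod.natCast_zmod_val a, hk, ← Nat.cast_mul, ← mul_assoc, Nat.div_mul_cancel hgN,
      Nat.cast_mul, ZMod.natCast_self, zero_mul]
  obtain ⟨c, hc⟩ := dvd_sub_one_of_unitsMap_eq_one hdN hu
  linear_combination a * hc + c * hda

lemma sum_mul_comp_mul_right {R : Type*} [CommRing R] [IsDomain R]
    {χ : DirichletCharacter R N} (hχ : χ.IsPrimitive) (f : ZMod N → R) (a : ZMod N) :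
    ∑ t, χ t * f (t * a) = χ⁻¹ a * ∑ t, χ t * f t := by
  have hshift (u : (ZMod N)ˣ) (c : ZMod N) :
      χ u * ∑ t, χ t * f (t * (u * c)) = ∑ t, χ t * f (t * c) := by
    rw [mul_sum]
    refine Fintype.sum_equiv (Units.mulRight u) _ _ fun t => ?_
    simp only [Units.mulRight_apply, map_mul]
    ring_nf
  by_cases ha : IsUnit a
  · obtain ⟨u, rfl⟩ := ha
    have h := hshift u 1
    simp only [mul_one] at h
    rw [← h, ← mul_assoc, ← MulChar.mul_apply, inv_mul_cancel, MulChar.one_apply u.isUnit, one_mul]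
  · obtain ⟨u, hua, hχu⟩ := exists_unit_mul_eq_self_and_apply_ne_one hχ ha
    have h := hshift u a
    rw [hua, ← sub_eq_zero, ← sub_one_mul] at h
    rw [MulChar.map_nonunit _ ha, zero_mul]
    exact (mul_eq_zero.1 h).resolve_left (sub_ne_zero.2 hχu)

end DirichletCharacter

section ResidueSum

open Finset

variable {ι : Type*} [Fintype ι] {N : ℕ}

/-- The defining condition of Shioda's set `𝔅` of Hodge classes on Fermat varieties: the residues
of `t * B i` have the same total for all units `t`. The total is not prescribed; for nonzero
entries it is forced to be half of `card ι * N`, see `two_mul_sum_val`. -/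
def HasInvariantResidueSum (B : ι → ZMod N) : Prop :=
  ∀ t : (ZMod N)ˣ, ∑ i, (t * B i).val = ∑ i, (B i).val

lemma hasInvariantResidueSum_natCast {b : ι → ℕ} {D : ℕ}
    (h : ∀ t : ℕ, t.Coprime N → ∑ i, (t * b i) % N = D) :
    HasInvariantResidueSum fun i => (b i : ZMod N) := fun t => by
  have ht := h _ (ZMod.val_coe_unit_coprime t)
  have hone := h 1 N.coprime_one_left
  simpa [ZMod.val_mul, ZMod.val_natCast] using ht.trans hone.symm

namespace HasInvariantResidueSum

variable [NeZero N] {B : ι → ZMod N}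

lemma two_mul_sum_val (hB : HasInvariantResidueSum B) (hne : ∀ i, B i ≠ 0) :
    2 * ∑ i, (B i).val = Fintype.card ι * N := by
  have hneg (i : ι) : (B i).val + (-B i).val = N := by
    have := NeZero.mk (hne i)
    rw [ZMod.val_neg_of_ne_zero, Nat.add_sub_cancel' (B i).val_le]
  calc 2 * ∑ i, (B i).val
    _ = ∑ i, (B i).val + ∑ i, ((-1 : (ZMod N)ˣ) * B i).val := by rw [hB, two_mul]
    _ = Fintype.card ι * N := by simp [← sum_add_distrib, hneg]

lemma sum_apply_eq_zero (hB : HasInvariantResidueSum B) {χ : DirichletCharacter ℂ N}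
    (hodd : χ.Odd) (hχ : χ.IsPrimitive) :
    ∑ i, χ (B i) = 0 := by
  have hodd' : χ⁻¹.Odd := by
    rw [DirichletCharacter.Odd, MulChar.inv_apply_eq_inv', hodd, inv_neg, inv_one]
  have hconst (t : ZMod N) :
      χ⁻¹ t * ∑ i, ((t * B i).val : ℂ) = χ⁻¹ t * ∑ i, ((B i).val : ℂ) := by
    by_cases ht : IsUnit t
    · obtain ⟨u, rfl⟩ := ht
      rw [← Nat.cast_sum, hB u, Nat.cast_sum]
    · rw [MulChar.map_nonunit _ ht, zero_mul, zero_mul]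
  have hprod : (∑ i, χ (B i)) * ∑ t, χ⁻¹ t * (t.val : ℂ) = 0 :=
    calc (∑ i, χ (B i)) * ∑ t, χ⁻¹ t * (t.val : ℂ)
      _ = ∑ i, ∑ t, χ⁻¹ t * ((t * B i).val : ℂ) := by
        rw [sum_mul]
        refine sum_congr rfl fun i _ => ?_
        rw [sum_mul_comp_mul_right (isPrimitive_inv hχ) (fun t => (t.val : ℂ)), inv_inv]
      _ = ∑ t, χ⁻¹ t * ∑ i, ((B i).val : ℂ) := by
        rw [sum_comm]
        exact sum_congr rfl fun t _ => by rw [← mul_sum, hconst]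
      _ = 0 := by
        rw [← sum_mul, MulChar.sum_eq_zero_of_ne_one (inv_ne_one.2 (ne_one_of_odd hodd)), zero_mul]
  exact (mul_eq_zero.1 hprod).resolve_right (sum_mul_val_ne_zero hodd' (isPrimitive_inv hχ))

end HasInvariantResidueSum

/-- The odd part of the multiplicity function of the family `B`: the number of occurrences of `a`
minus that of `-a`, so that pairs of entries `a, -a` cancel. -/
def signedMultiplicity (B : ι → ZMod N) (a : ZMod N) : ℤ :=
  #{i | B i = a} - #{i | B i = -a}

variable [NeZero N]

lemma totient_mul_card_filter_eq (B : ι → ZMod N) (u : (ZMod N)ˣ) :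
    (N.totient * #{i | B i = u} : ℂ) =
      ∑ χ : DirichletCharacter ℂ N, χ ↑u⁻¹ * ∑ i, χ (B i) := by
  simp_rw [mul_sum]
  rw [sum_comm]
  simp_rw [← ZMod.inv_coe_unit, DirichletCharacter.sum_char_inv_mul_char_eq ℂ u.isUnit,
    ← sum_filter, sum_const, nsmul_eq_mul, mul_comm (N.totient : ℂ), eq_comm]

lemma totient_mul_signedMultiplicity (B : ι → ZMod N) (u : (ZMod N)ˣ) :
    (N.totient * signedMultiplicity B u : ℂ) =
      ∑ χ : DirichletCharacter ℂ N, (1 - χ (-1)) * χ ↑u⁻¹ * ∑ i, χ (B i) := by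
  rw [signedMultiplicity, Int.cast_sub, mul_sub, Int.cast_natCast, Int.cast_natCast,
    totient_mul_card_filter_eq B u, ← Units.val_neg, totient_mul_card_filter_eq B (-u),
    ← sum_sub_distrib]
  refine sum_congr rfl fun χ _ => ?_
  rw [inv_neg, Units.val_neg, ← neg_one_mul (↑u⁻¹ : ZMod N), map_mul]
  ring

lemma HasInvariantResidueSum.signedMultiplicity_unit_mul {B : ι → ZMod N}
    (hB : HasInvariantResidueSum B) {v : (ZMod N)ˣ}
    (hv : ∀ χ : DirichletCharacter ℂ N, ¬ χ.IsPrimitive → χ v = 1) (u : (ZMod N)ˣ) :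
    signedMultiplicity B ↑(u * v) = signedMultiplicity B u := by
  have htotient : (N.totient : ℂ) ≠ 0 :=
    Nat.cast_ne_zero.2 (Nat.totient_pos.2 (NeZero.pos N)).ne'
  rw [← Int.cast_inj (α := ℂ), ← mul_right_inj' htotient, totient_mul_signedMultiplicity,
    totient_mul_signedMultiplicity]
  refine sum_congr rfl fun χ _ => ?_
  rcases χ.even_or_odd with heven | hodd
  · rw [heven, sub_self, zero_mul, zero_mul, zero_mul, zero_mul]
  · by_cases hχ : χ.IsPrimitive
    · rw [hB.sum_apply_eq_zero hodd hχ, mul_zero, mul_zero]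
    · rw [mul_inv, Units.val_mul, map_mul, map_units_inv χ v, hv χ hχ, inv_one, mul_one]

lemma apply_eq_one_of_not_isPrimitive {p n : ℕ} (hp : p.Prime) {R : Type*} [CommRing R]
    {χ : DirichletCharacter R (p ^ (n + 1))} (hχ : ¬ χ.IsPrimitive) {v : (ZMod (p ^ (n + 1)))ˣ}
    (hv : ZMod.unitsMap (pow_dvd_pow p n.le_succ) v = 1) : χ v = 1 := by
  have : NeZero (p ^ (n + 1)) := ⟨pow_ne_zero _ hp.ne_zero⟩
  have hdvd : χ.conductor ∣ p ^ n := by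
    contrapose! hχ
    exact Nat.eq_prime_pow_of_dvd_least_prime_pow hp hχ χ.conductor_dvd_level
  have hfactors := χ.factorsThrough_conductor.mono _ hdvd (pow_dvd_pow p n.le_succ)
  exact congr_arg Units.val
    ((DirichletCharacter.factorsThrough_iff_ker_unitsMap _).1 hfactors hv)

lemma HasInvariantResidueSum.mem_range_of_unitsMap_eq {p n : ℕ} (hp : p.Prime)
    {B : ι → ZMod (p ^ (n + 1))} (hB : HasInvariantResidueSum B) {u v : (ZMod (p ^ (n + 1)))ˣ}
    (huv : ZMod.unitsMap (pow_dvd_pow p n.le_succ) u = ZMod.unitsMap (pow_dvd_pow p n.le_succ) v)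
    (hu : ↑u ∈ Set.range B) (hneg : -↑u ∉ Set.range B) : ↑v ∈ Set.range B := by
  have : NeZero (p ^ (n + 1)) := ⟨pow_ne_zero _ hp.ne_zero⟩
  have hquot : ZMod.unitsMap (pow_dvd_pow p n.le_succ) (u⁻¹ * v) = 1 := by
    rw [map_mul, map_inv, huv, inv_mul_cancel]
  have hsigned := hB.signedMultiplicity_unit_mul
    (fun χ hχ => apply_eq_one_of_not_isPrimitive hp hχ hquot) u
  have hu_pos : 0 < #{i | B i = u} := by
    obtain ⟨i, hi⟩ := hu
    exact card_pos.2 ⟨i, by simpa using hi⟩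
  have hu_neg : #{i | B i = -u} = 0 :=
    card_eq_zero.2 (filter_eq_empty_iff.2 fun i _ hi => hneg ⟨i, hi⟩)
  rw [mul_inv_cancel_left, signedMultiplicity, signedMultiplicity, hu_neg] at hsigned
  have hv_pos : 0 < #{i | B i = v} := by lia
  obtain ⟨i, hi⟩ := card_pos.1 hv_pos
  exact ⟨i, (mem_filter.1 hi).2⟩

end ResidueSum

section Classification

open Finset

variable {ι : Type*} [Fintype ι] {p : ℕ}

lemma not_dvd_add_of_indecomposable {m : ℕ} {b : ι → ℕ} (hcard : 2 < Fintype.card ι)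
    (hindec : ∀ S : Finset ι, S ≠ ∅ → S ≠ univ → Even #S → ¬ m ∣ ∑ i ∈ S, b i) {i j : ι}
    (hij : i ≠ j) : ¬ m ∣ b i + b j := by
  classical
  rw [← sum_pair hij]
  refine hindec {i, j} (insert_ne_empty _ _) (fun h => ?_) (by simp [card_pair hij])
  rw [← card_univ, ← h, card_pair hij] at hcard
  exact hcard.false

lemma exists_not_dvd_of_injective (hp : 0 < p) {b : ι → ℕ} (hcard : p < Fintype.card ι)
    (hinj : Function.Injective b) (hb : ∀ i, b i ∈ Ioc 0 (p ^ 2)) : ∃ i, ¬ p ∣ b i := by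
  by_contra! hdvd
  have hle : #(univ.map ⟨b, hinj⟩) ≤ #{x ∈ Ioc 0 (p ^ 2) | p ∣ x} :=
    card_le_card fun x hx => by
      obtain ⟨i, -, rfl⟩ := mem_map.1 hx
      exact mem_filter.2 ⟨hb i, hdvd i⟩
  rw [card_map, card_univ, Nat.Ioc_filter_dvd_card_eq_div, pow_two, Nat.mul_div_cancel _ hp] at hle
  exact hle.not_gt hcard

lemma exists_eq_of_modEq (hp : p.Prime) {n : ℕ} (hn : n ≠ 0) {b : ι → ℕ}
    (hlt : ∀ i, b i < p ^ (n + 1))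
    (hB : HasInvariantResidueSum fun i => (b i : ZMod (p ^ (n + 1))))
    (hpair : ∀ i j, i ≠ j → ¬ p ^ (n + 1) ∣ b i + b j) {i : ι} (hi : ¬ p ∣ b i) {c : ℕ}
    (hc : c < p ^ (n + 1)) (hmod : b i ≡ c [MOD p ^ n]) : ∃ j, b j = c := by
  have hcop {a : ℕ} (ha : ¬ p ∣ a) : a.Coprime (p ^ (n + 1)) :=
    .pow_right _ (hp.coprime_iff_not_dvd.2 ha).symm
  have hc' : ¬ p ∣ c := (hmod.dvd_iff (dvd_pow_self p hn)).not.1 hi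
  have htwo : 2 < p ^ (n + 1) := hp.two_le.trans_lt (lt_self_pow₀ hp.one_lt (by lia))
  have hdouble : ¬ p ^ (n + 1) ∣ 2 * b i := fun h =>
    htwo.not_ge (Nat.le_of_dvd two_pos ((hcop hi).symm.dvd_of_dvd_mul_right h))
  have hneg (j : ι) : ¬ p ^ (n + 1) ∣ b j + b i := by
    rcases eq_or_ne j i with rfl | hji
    · rwa [← two_mul]
    · exact hpair j i hji
  have hunits : ZMod.unitsMap (pow_dvd_pow p n.le_succ) (ZMod.unitOfCoprime _ (hcop hi)) =
      ZMod.unitsMap (pow_dvd_pow p n.le_succ) (ZMod.unitOfCoprime _ (hcop hc')) := by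
    ext
    simpa only [ZMod.unitsMap_val, ZMod.coe_unitOfCoprime,
      ZMod.cast_natCast (pow_dvd_pow p n.le_succ)] using (ZMod.natCast_eq_natCast_iff _ _ _).2 hmod
  have hnot_mem : -(ZMod.unitOfCoprime _ (hcop hi) : ZMod (p ^ (n + 1))) ∉
      Set.range fun j => (b j : ZMod (p ^ (n + 1))) := by
    rintro ⟨j, hj⟩
    refine hneg j ((ZMod.natCast_eq_zero_iff _ _).1 ?_)
    rwa [Nat.cast_add, ← eq_neg_iff_add_eq_zero]
  obtain ⟨j, hj⟩ := hB.mem_range_of_unitsMap_eq hp hunits ⟨i, rfl⟩ hnot_mem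
  exact ⟨j, ((ZMod.natCast_eq_natCast_iff _ _ _).1 hj).eq_of_lt_of_lt (hlt j) hc⟩

lemma eq_betaSet_of_image_subset (hp : 0 < p) {r : ℕ} (hr : r ≤ p) {s : Finset ℕ}
    (hs : (range p).image (fun h => r + h * p) ⊆ s) (hcard : #s = p + 1)
    (hsum : 2 * ∑ x ∈ s, x = (p + 1) * p ^ 2) : s = betaSet p r := by
  set progression := (range p).image fun h => r + h * p
  have hinj : Function.Injective fun h => r + h * p := fun h k hhk =>
    Nat.eq_of_mul_eq_mul_right hp (Nat.add_left_cancel hhk)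
  have hrest : #(s \ progression) = 1 := by
    rw [card_sdiff_of_subset hs, hcard, card_image_of_injective _ hinj, card_range,
      Nat.add_sub_cancel_left]
  obtain ⟨x, hx⟩ := card_eq_one.1 hrest
  have hx_eq : x = p * (p - r) := by
    have hgauss := sum_range_id_mul_two p
    rw [← sum_sdiff hs, hx, sum_singleton, sum_image hinj.injOn, sum_add_distrib, sum_const,
      card_range, smul_eq_mul, ← sum_mul] at hsum
    zify [hr, Nat.one_le_of_lt hp] at hsum hgauss ⊢
    refine mul_left_cancel₀ two_ne_zero ?_
    linear_combination hsum - p * hgauss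
  rw [betaSet, ← hx_eq, ← hx, union_sdiff_of_subset hs]

theorem stmt13_general (hp : p.Prime) {b : Fin (p + 1) → ℕ} (hinj : Function.Injective b)
    (hpos : ∀ i, 0 < b i) (hlt : ∀ i, b i < p ^ 2) {D : ℕ}
    (hres : ∀ t : ℕ, t.Coprime (p ^ 2) → ∑ i, (t * b i) % p ^ 2 = D)
    (hpair : ∀ i j, i ≠ j → ¬ p ^ 2 ∣ b i + b j) :
    ∃ r, 1 ≤ r ∧ r ≤ p - 1 ∧ univ.image b = betaSet p r := by
  have : NeZero (p ^ 2) := ⟨pow_ne_zero 2 hp.ne_zero⟩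
  have hB := hasInvariantResidueSum_natCast hres
  obtain ⟨i, hi⟩ := exists_not_dvd_of_injective hp.pos (by simp) hinj fun i =>
    mem_Ioc.2 ⟨hpos i, (hlt i).le⟩
  have hr_pos : 0 < b i % p := Nat.pos_of_ne_zero fun h => hi (Nat.dvd_of_mod_eq_zero h)
  have hr_lt : b i % p < p := Nat.mod_lt _ hp.pos
  refine ⟨b i % p, hr_pos, Nat.le_sub_one_of_lt hr_lt,
    eq_betaSet_of_image_subset hp.pos hr_lt.le ?_ ?_ ?_⟩
  · refine image_subset_iff.2 fun h hh => ?_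
    have hc : b i % p + h * p < p ^ 2 := by
      have := Nat.mul_le_mul_right p (Nat.succ_le_of_lt (mem_range.1 hh))
      lia
    obtain ⟨j, hj⟩ := exists_eq_of_modEq hp one_ne_zero hlt hB hpair hi hc (by simp [Nat.ModEq])
    exact mem_image.2 ⟨j, mem_univ j, hj⟩
  · rw [card_image_of_injective _ hinj, card_univ, Fintype.card_fin]
  · have hne (j : Fin (p + 1)) : (b j : ZMod (p ^ 2)) ≠ 0 := fun h =>
      (Nat.le_of_dvd (hpos j) ((ZMod.natCast_eq_zero_iff _ _).1 h)).not_gt (hlt j)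
    simpa [sum_image hinj.injOn, ZMod.val_natCast, Nat.mod_eq_of_lt (hlt _)] using
      hB.two_mul_sum_val hne

end Classification

/-- every indecomposable element of 𝔅_{p²}^{(p+1)/2} is (after
sorting) one of the tuples β_i for some 1 ≤ i ≤ p-1. -/
theorem stmt13 (p : ℕ) (hp : p.Prime) (hodd : Odd p)
    (b : Fin (p + 1) → ℕ) (hmono : StrictMono b)
    (hlb : ∀ i, 1 ≤ b i) (hub : ∀ i, b i ≤ p ^ 2 - 1)
    (hres : ∀ t : ℕ, Nat.Coprime t (p ^ 2) →
      ∑ i, (t * b i) % p ^ 2 = ((p + 1) / 2) * p ^ 2)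
    (hindec : ∀ S : Finset (Fin (p + 1)), S ≠ ∅ → S ≠ Finset.univ →
      Even S.card → ¬ (p ^ 2 ∣ ∑ i ∈ S, b i)) :
    ∃ i : ℕ, 1 ≤ i ∧ i ≤ p - 1 ∧ Finset.univ.image b = betaSet p i :=
  stmt13_general hp hmono.injective hlb
    (fun i => Nat.lt_of_le_sub_one (pow_pos hp.pos 2) (hub i)) hres fun _ _ =>
    not_dvd_add_of_indecomposable (by simpa using hp.two_le) hindec
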